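/- Let E be a real normed space, let k ≥ 0, let δ : (0,∞) → (0,∞) be a function with iterates δ_m, and let S, T be subsets of E with ∅ ≠ S ⊆ T such that O_{δ(ε)}(y) ∩ T ↪_k O_ε(y) ∩ T for every y ∈ E and ε > 0, and O_{δ(ε)}(y) ∩ S ↪_i O_ε(y) ∩ S for every y ∈ E, ε > 0 and 0 ≤ i < k. Define η(ε) = δ(ε)/2 and λ(ε,μ) = δ_k(min{η(ε), μ}) for ε, μ > 0. Then O_{η(ε)}(y) ∩ O_{λ(ε,μ)}(S) ↪_k O_ε(y) ∩ O_μ(T) for every y ∈ E and all ε, μ > 0. -/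

import Mathlib

open Metric Set

/-- `S ↪ₖ B`: every continuous map of the `k`-sphere (unit sphere of `ℝ^{k+1}`) into `S`
extends to a continuous map of the closed unit `(k+1)`-ball into `B`. -/
def EmbedK {Y : Type*} [TopologicalSpace Y] (k : ℕ) (S B : Set Y) : Prop :=
  ∀ g : sphere (0 : EuclideanSpace ℝ (Fin (k + 1))) 1 → Y,
    Continuous g → (∀ p, g p ∈ S) →
      ∃ h : closedBall (0 : EuclideanSpace ℝ (Fin (k + 1))) 1 → Y,
        Continuous h ∧ (∀ p, h p ∈ B) ∧
          ∀ p : sphere (0 : EuclideanSpace ℝ (Fin (k + 1))) 1,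
            h ⟨p.1, sphere_subset_closedBall p.2⟩ = g p

/-- Lower semi-continuity of a set-valued mapping. -/
def LSC {X Y : Type*} [TopologicalSpace X] [TopologicalSpace Y] (Φ : X → Set Y) : Prop :=
  ∀ U : Set Y, IsOpen U → IsOpen {x | (Φ x ∩ U).Nonempty}

/-- Lower locally constant set-valued mapping. -/
def LowerLocallyConstant {X Y : Type*} [TopologicalSpace X] [TopologicalSpace Y]
    (φ : X → Set Y) : Prop :=
  ∀ K : Set Y, IsCompact K → IsOpen {x | K ⊆ φ x}

/-- `dim X ≤ m`: every open cover has an open refinement (still a cover) such that any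
`m + 2` pairwise distinct members of the refinement have empty intersection. -/
def DimLE (X : Type*) [TopologicalSpace X] (m : ℤ) : Prop :=
  ∀ 𝒰 : Set (Set X), (∀ U ∈ 𝒰, IsOpen U) → ⋃₀ 𝒰 = univ →
    ∃ 𝒱 : Set (Set X), (∀ V ∈ 𝒱, IsOpen V) ∧ ⋃₀ 𝒱 = univ ∧
      (∀ V ∈ 𝒱, ∃ U ∈ 𝒰, V ⊆ U) ∧
      ∀ σ : Finset (Set X), ↑σ ⊆ 𝒱 → (σ.card : ℤ) = m + 2 → ⋂₀ (σ : Set (Set X)) = ∅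

/-- The open `ε`-neighbourhood `O_ε(S)` of a set `S` in a metric space. -/
def ONbhd {Y : Type*} [PseudoMetricSpace Y] (ε : ℝ) (S : Set Y) : Set Y :=
  ⋃ y ∈ S, ball y ε

/-! Replace the unit sphere of `ℝ^(k+1)` by the surface of a cube. For a map `g` of this surface
put `Φᵢ x = ball (g x) (δ_{k-i} ν) ∩ S` with `ν = min (δ ε / 2) μ`, so that `Φᵢ x ↪ᵢ Φᵢ₊₁ x`. A
selection of `Φ_k` is built, one skeleton of a cubical lattice at a time. Given an approximate
selection of `Φᵢ` over the `i`-skeleton, the boundaries of the cells near a point `x` are filled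
in `Φᵢ₊₁ x`. These fillings have compact image, so by lower local constancy they are also
acceptable at all points near `x`, and a Lebesgue number tells how finely the lattice has to be
subdivided to make cells smaller than that. The crux is that the fillings, chosen before the mesh
is known, live on the coarse lattice: a cellular map collapsing the fine lattice onto the coarse
one pulls them back.

The selection `f` obtained in this way maps into `S` and is `ν`-close to `g`. It extends over the
ball with values in `ball y ε ∩ T`, and the straight segments from `f x` to `g x`, inserted in a
collar of the surface, turn this extension into one of `g`. -/

theorem exists_homeomorph_norm_eq {V W : Type*} [NormedAddCommGroup V] [NormedSpace ℝ V]
    [NormedAddCommGroup W] [NormedSpace ℝ W] (L : V ≃L[ℝ] W) :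
    ∃ e : V ≃ₜ W, ∀ x, ‖e x‖ = ‖x‖ := by
  let p : Seminorm ℝ V := (normSeminorm ℝ W).comp (L : V →ₗ[ℝ] W)
  have ball_eq : p.ball 0 1 = L ⁻¹' ball 0 1 := by
    ext x; simp [p]
  have ball_mem : p.ball 0 1 ∈ nhds 0 := by
    rw [ball_eq]
    exact L.continuous.continuousAt.preimage_mem_nhds (by simpa using ball_mem_nhds (0 : W) one_pos)
  have ball_bounded : Bornology.IsVonNBounded ℝ (p.ball 0 1) := by
    rw [ball_eq, ← L.image_symm_eq_preimage]
    exact (NormedSpace.isVonNBounded_ball ℝ W 1).image (L.symm : W →L[ℝ] V)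
  have unit_ball_bounded := NormedSpace.isVonNBounded_ball ℝ V 1
  have unit_ball_mem := ball_mem_nhds (0 : V) one_pos
  refine ⟨(gaugeRescaleHomeomorph (ball (0 : V) 1) (p.ball 0 1) (convex_ball 0 1) unit_ball_mem
    unit_ball_bounded (p.convex_ball 0 1) ball_mem ball_bounded).trans L.toHomeomorph, fun x => ?_⟩
  calc ‖L (gaugeRescale (ball 0 1) (p.ball 0 1) x)‖
      = gauge (p.ball 0 1) (gaugeRescale (ball 0 1) (p.ball 0 1) x) := by
        rw [p.gauge_ball]; rfl
    _ = gauge (ball 0 1) x := gauge_gaugeRescale _ (absorbent_nhds_zero ball_mem) ball_bounded x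
    _ = ‖x‖ := by rw [gauge_ball one_pos.le, div_one]

section SphereFilling

variable {Y V W : Type*} [TopologicalSpace Y] [NormedAddCommGroup V]
  [NormedAddCommGroup W] {k : ℕ} {S B : Set Y}

/-- The relation `S ↪ B` for the unit sphere of an arbitrary normed space `V`. The maps are total
functions that are continuous on the sphere or on the ball, which makes them easy to restrict,
compose and glue. -/
def SphereFilling (V : Type*) [NormedAddCommGroup V] (S B : Set Y) : Prop :=
  ∀ u : V → Y, ContinuousOn u (sphere 0 1) → MapsTo u (sphere 0 1) S →
    ∃ h : V → Y, ContinuousOn h (closedBall 0 1) ∧ MapsTo h (closedBall 0 1) B ∧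
      EqOn h u (sphere 0 1)

theorem SphereFilling.of_homeomorph (hV : SphereFilling V S B) (e : V ≃ₜ W)
    (norm_e : ∀ x, ‖e x‖ = ‖x‖) : SphereFilling W S B := by
  intro u hu u_mem
  have e_sphere : MapsTo e (sphere 0 1) (sphere 0 1) := fun x hx => by simpa [norm_e] using hx
  have norm_e_symm (w : W) : ‖e.symm w‖ = ‖w‖ := by rw [← norm_e, e.apply_symm_apply]
  have e_symm_sphere : MapsTo e.symm (sphere 0 1) (sphere 0 1) := fun x hx => by
    simpa [norm_e_symm] using hx
  have e_symm_closedBall : MapsTo e.symm (closedBall 0 1) (closedBall 0 1) := fun x hx => by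
    simpa [norm_e_symm] using hx
  obtain ⟨h, h_cont, h_mem, h_eq⟩ :=
    hV (u ∘ e) (hu.comp e.continuous.continuousOn e_sphere) (u_mem.comp e_sphere)
  refine ⟨h ∘ e.symm, h_cont.comp e.symm.continuous.continuousOn e_symm_closedBall,
    h_mem.comp e_symm_closedBall, fun w hw => ?_⟩
  simpa using h_eq (e_symm_sphere hw)

theorem embedK_iff_sphereFilling_euclideanSpace :
    EmbedK k S B ↔ SphereFilling (EuclideanSpace ℝ (Fin (k + 1))) S B := by
  constructor
  · intro hSB u hu u_mem
    have : Nonempty Y := ⟨u 0⟩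
    obtain ⟨h, h_cont, h_mem, h_eq⟩ :=
      hSB (fun p => u p) (continuousOn_iff_continuous_domRestrict.1 hu) fun p => u_mem p.2
    obtain ⟨H, rfl⟩ := Subtype.val_injective.surjective_comp_right h
    exact ⟨H, continuousOn_iff_continuous_domRestrict.2 h_cont, fun x hx => h_mem ⟨x, hx⟩,
      fun x hx => h_eq ⟨x, hx⟩⟩
  · intro hSB g g_cont g_mem
    obtain ⟨p, hp⟩ := NormedSpace.sphere_nonempty (E := EuclideanSpace ℝ (Fin (k + 1))) (x := 0).2
      zero_le_one
    have : Nonempty Y := ⟨g ⟨p, hp⟩⟩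
    obtain ⟨G, rfl⟩ := Subtype.val_injective.surjective_comp_right g
    obtain ⟨h, h_cont, h_mem, h_eq⟩ :=
      hSB G (continuousOn_iff_continuous_domRestrict.2 g_cont) fun p hp => g_mem ⟨p, hp⟩
    exact ⟨fun p => h p, continuousOn_iff_continuous_domRestrict.1 h_cont, fun p => h_mem p.2,
      fun p => h_eq p.2⟩

theorem embedK_iff_sphereFilling [NormedSpace ℝ W] [FiniteDimensional ℝ W]
    (hW : Module.finrank ℝ W = k + 1) :
    EmbedK k S B ↔ SphereFilling W S B := by
  have : T2Space (EuclideanSpace ℝ (Fin (k + 1))) := TopologicalSpace.t2Space_of_metrizableSpace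
  obtain ⟨L⟩ : Nonempty (EuclideanSpace ℝ (Fin (k + 1)) ≃L[ℝ] W) :=
    FiniteDimensional.nonempty_continuousLinearEquiv_of_finrank_eq (by simp [hW])
  obtain ⟨e, norm_e⟩ := exists_homeomorph_norm_eq L
  rw [embedK_iff_sphereFilling_euclideanSpace]
  exact ⟨fun h => h.of_homeomorph e norm_e, fun h => h.of_homeomorph e.symm fun w => by
    rw [← norm_e, e.apply_symm_apply]⟩

theorem EmbedK.subset (hSB : EmbedK k S B) : S ⊆ B := by
  intro y hy
  obtain ⟨p, hp⟩ := NormedSpace.sphere_nonempty (E := EuclideanSpace ℝ (Fin (k + 1))) (x := 0).2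
    zero_le_one
  obtain ⟨h, -, h_mem, h_eq⟩ := hSB (fun _ => y) continuous_const fun _ => hy
  exact h_eq ⟨p, hp⟩ ▸ h_mem _

end SphereFilling

section Lattice

variable {ι : Type*} {m M : ℕ} {s t : ι → ℝ}

/-- The coordinates of `t` that are not integers, i.e. the directions along which the open cell of
the cubical lattice containing `t` extends. -/
def freeCoords (t : ι → ℝ) : Set ι :=
  {i | t i ∉ range ((↑) : ℤ → ℝ)}

/-- The smallest closed cell of the cubical lattice `ℤ^ι` that contains `t`; its dimension is the
number of free coordinates of `t`. -/
def latticeCell (t : ι → ℝ) : Set (ι → ℝ) :=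
  Icc (fun i => (⌊t i⌋ : ℝ)) fun i => (⌈t i⌉ : ℝ)

/-- The union of the lattice cells of dimension less than `m`. The strict inequality makes
`latticeSkeleton ι 0` empty, so that skeleta can be built up from nothing. -/
def latticeSkeleton (ι : Type*) (m : ℕ) : Set (ι → ℝ) :=
  {t | (freeCoords t).ncard < m}

theorem mem_latticeCell_self (t : ι → ℝ) : t ∈ latticeCell t :=
  ⟨fun i => Int.floor_le (t i), fun i => Int.le_ceil (t i)⟩

theorem isClosed_latticeCell (t : ι → ℝ) : IsClosed (latticeCell t) :=
  isClosed_Icc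

theorem apply_eq_of_mem_latticeCell (hs : s ∈ latticeCell t) {i : ι} (hi : i ∉ freeCoords t) :
    s i = t i := by
  obtain ⟨n, hn⟩ := not_not.1 hi
  have h₁ := hs.1 i
  have h₂ := hs.2 i
  simp only [← hn, Int.floor_intCast, Int.ceil_intCast] at h₁ h₂
  exact hn ▸ le_antisymm h₂ h₁

theorem ceil_eq_floor_add_one_of_mem_freeCoords {i : ι} (hi : i ∈ freeCoords t) :
    ⌈t i⌉ = ⌊t i⌋ + 1 :=
  Int.ceil_eq_floor_add_one_iff_notMem _ |>.2 hi

theorem freeCoords_subset_of_mem_latticeCell (hs : s ∈ latticeCell t) :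
    freeCoords s ⊆ freeCoords t := fun i hi hit => by
  rw [freeCoords, mem_ofPred, apply_eq_of_mem_latticeCell hs (not_not.2 hit)] at hi
  exact hi hit

theorem latticeCell_eq_of_freeCoords_subset (hs : s ∈ latticeCell t)
    (hst : freeCoords t ⊆ freeCoords s) : latticeCell s = latticeCell t := by
  have floor_eq (i : ι) : ⌊s i⌋ = ⌊t i⌋ ∧ ⌈s i⌉ = ⌈t i⌉ := by
    by_cases hi : i ∈ freeCoords t
    · have ceil_s := ceil_eq_floor_add_one_of_mem_freeCoords (hst hi)
      have ceil_t := ceil_eq_floor_add_one_of_mem_freeCoords hi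
      have h₁ : ⌊t i⌋ ≤ ⌊s i⌋ := Int.le_floor.2 (hs.1 i)
      have h₂ : ⌈s i⌉ ≤ ⌈t i⌉ := Int.ceil_le.2 (hs.2 i)
      lia
    · rw [apply_eq_of_mem_latticeCell hs hi]
      exact ⟨rfl, rfl⟩
  simp only [latticeCell, floor_eq]

theorem dist_le_one_of_mem_latticeCell [Fintype ι] (hs : s ∈ latticeCell t) : dist s t ≤ 1 :=
  (dist_pi_le_iff zero_le_one).2 fun i => by
    rw [Real.dist_eq, abs_le]
    have h₁ : (⌊t i⌋ : ℝ) ≤ s i := hs.1 i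
    have h₂ : s i ≤ ⌈t i⌉ := hs.2 i
    have h₃ := Int.lt_floor_add_one (t i)
    have h₄ := Int.ceil_lt_add_one (t i)
    constructor <;> linarith

theorem exists_notMem_freeCoords_norm_apply_eq [Fintype ι] [Nonempty ι]
    (ht : t ∈ sphere (0 : ι → ℝ) M) : ∃ i, i ∉ freeCoords t ∧ ‖t i‖ = M := by
  obtain ⟨i, hi⟩ := (IsGreatest.pi_norm t).1
  have norm_eq : ‖t i‖ = M := hi.trans (mem_sphere_zero_iff_norm.1 ht)
  refine ⟨i, not_not.2 ?_, norm_eq⟩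
  rcases eq_or_eq_neg_of_abs_eq norm_eq with h | h
  · exact ⟨M, by simp [h]⟩
  · exact ⟨-M, by simp [h]⟩

theorem floor_ceil_bounds_of_mem_closedBall [Fintype ι] (ht : t ∈ closedBall (0 : ι → ℝ) M)
    (i : ι) :
    -(M : ℤ) ≤ ⌊t i⌋ ∧ ⌈t i⌉ ≤ (M : ℤ) := by
  rw [mem_closedBall_zero_iff, pi_norm_le_iff_of_nonneg M.cast_nonneg] at ht
  obtain ⟨ht₁, ht₂⟩ := abs_le.1 (ht i)
  exact ⟨Int.le_floor.2 (by exact_mod_cast ht₁), Int.ceil_le.2 (by exact_mod_cast ht₂)⟩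

theorem latticeCell_subset_closedBall [Fintype ι] (ht : t ∈ closedBall (0 : ι → ℝ) M) :
    latticeCell t ⊆ closedBall 0 (M : ℝ) := fun s hs => by
  refine mem_closedBall_zero_iff.2 ((pi_norm_le_iff_of_nonneg M.cast_nonneg).2 fun i => ?_)
  have bounds : -(M : ℝ) ≤ ⌊t i⌋ ∧ (⌈t i⌉ : ℝ) ≤ M := by
    exact_mod_cast floor_ceil_bounds_of_mem_closedBall ht i
  exact abs_le.2 ⟨bounds.1.trans (hs.1 i), (hs.2 i).trans bounds.2⟩

theorem latticeCell_subset_sphere [Fintype ι] [Nonempty ι] (ht : t ∈ sphere (0 : ι → ℝ) M) :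
    latticeCell t ⊆ sphere 0 (M : ℝ) := fun s hs => by
  obtain ⟨i, hi, norm_eq⟩ := exists_notMem_freeCoords_norm_apply_eq ht
  rw [mem_sphere_zero_iff_norm]
  refine le_antisymm (mem_closedBall_zero_iff.1
    (latticeCell_subset_closedBall (sphere_subset_closedBall ht) hs)) ?_
  rw [← norm_eq, ← apply_eq_of_mem_latticeCell hs hi]
  exact norm_le_pi_norm s i

theorem mem_latticeSkeleton_or_latticeCell_eq [Finite ι] (hs : s ∈ latticeCell t)
    (ht : t ∈ latticeSkeleton ι (m + 1)) :
    s ∈ latticeSkeleton ι m ∨ latticeCell s = latticeCell t := by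
  refine or_iff_not_imp_left.2 fun hsm => latticeCell_eq_of_freeCoords_subset hs
    (eq_of_subset_of_ncard_le (freeCoords_subset_of_mem_latticeCell hs) ?_ (toFinite _)).ge
  simp only [latticeSkeleton, mem_ofPred] at hsm ht
  lia

theorem latticeCell_subset_latticeSkeleton [Finite ι] (ht : t ∈ latticeSkeleton ι m) :
    latticeCell t ⊆ latticeSkeleton ι m := fun _ hs =>
  (ncard_le_ncard (freeCoords_subset_of_mem_latticeCell hs) (toFinite _)).trans_lt ht

theorem isClosed_latticeSkeleton [Finite ι] (m : ℕ) : IsClosed (latticeSkeleton ι m) := by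
  rw [← isOpen_compl_iff, isOpen_iff_mem_nhds]
  intro t ht
  have freeCoords_subset : ∀ᶠ s in nhds t, ∀ i ∈ freeCoords t, i ∈ freeCoords s := by
    refine (Filter.eventually_all_finite (toFinite _)).2 fun i hi => ?_
    exact (continuous_apply i).continuousAt.eventually
      (Int.isClosedEmbedding_coe_real.isClosed_range.isOpen_compl.mem_nhds hi)
  filter_upwards [freeCoords_subset] with s hs hsm
  exact ht ((ncard_le_ncard hs (toFinite _)).trans_lt hsm)

theorem sphere_subset_latticeSkeleton [Fintype ι] [Nonempty ι] (M : ℕ) :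
    sphere (0 : ι → ℝ) M ⊆ latticeSkeleton ι (Fintype.card ι) := fun t ht => by
  obtain ⟨i, hi, -⟩ := exists_notMem_freeCoords_norm_apply_eq ht
  have hlt := ncard_lt_card (s := freeCoords t) fun h => hi (h ▸ mem_univ i)
  rwa [Nat.card_eq_fintype_card] at hlt

theorem finite_latticeCell_image_closedBall [Fintype ι] (M : ℕ) :
    (latticeCell '' closedBall (0 : ι → ℝ) M).Finite := by
  classical
  let box : Set (ι → ℤ) := Icc (fun _ => -M) fun _ => M
  refine ((finite_Icc _ _ : box.Finite).prod (finite_Icc _ _ : box.Finite)).image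
    (fun c => Icc (fun i => (c.1 i : ℝ)) fun i => (c.2 i : ℝ)) |>.subset ?_
  rintro _ ⟨t, ht, rfl⟩
  have bounds := floor_ceil_bounds_of_mem_closedBall ht
  exact ⟨(fun i => ⌊t i⌋, fun i => ⌈t i⌉),
    ⟨⟨fun i => (bounds i).1, fun i => (Int.floor_le_ceil _).trans (bounds i).2⟩,
      fun i => (bounds i).1.trans (Int.floor_le_ceil _), fun i => (bounds i).2⟩, rfl⟩

end Lattice

section Chart

variable {ι : Type*} {s t : ι → ℝ}

open Classical in
/-- The affine parametrization of the lattice cell of `t` by the cube `[-1, 1]^(freeCoords t)`. -/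
noncomputable def ofCube (t : ι → ℝ) (y : freeCoords t → ℝ) (i : ι) : ℝ :=
  if hi : i ∈ freeCoords t then ⌊t i⌋ + 1 / 2 + y ⟨i, hi⟩ / 2 else t i

/-- The inverse of `ofCube t` on the lattice cell of `t`. -/
noncomputable def toCube (t s : ι → ℝ) (i : freeCoords t) : ℝ :=
  2 * (s i - ⌊t i⌋) - 1

theorem continuous_ofCube (t : ι → ℝ) : Continuous (ofCube t) :=
  continuous_pi fun i => by unfold ofCube; split <;> fun_prop

theorem continuous_toCube (t : ι → ℝ) : Continuous (toCube t) := by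
  unfold toCube; fun_prop

theorem ofCube_toCube (hs : s ∈ latticeCell t) : ofCube t (toCube t s) = s := by
  ext i
  by_cases hi : i ∈ freeCoords t
  · simp only [ofCube, toCube, hi, dite_true]; ring
  · simp only [ofCube, hi, dite_false, apply_eq_of_mem_latticeCell hs hi]

variable [Fintype (freeCoords t)] {y : freeCoords t → ℝ}

theorem ofCube_mem_latticeCell (hy : y ∈ closedBall 0 1) : ofCube t y ∈ latticeCell t := by
  rw [mem_closedBall_zero_iff, pi_norm_le_iff_of_nonneg zero_le_one] at hy
  refine forall_and.1 fun i => ?_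
  by_cases hi : i ∈ freeCoords t
  · have y_mem := abs_le.1 (hy ⟨i, hi⟩)
    simp only [ofCube, hi, dite_true, ceil_eq_floor_add_one_of_mem_freeCoords hi]
    push_cast
    constructor <;> linarith
  · simp only [ofCube, hi, dite_false]
    exact ⟨Int.floor_le _, Int.le_ceil _⟩

theorem toCube_mem_closedBall (hs : s ∈ latticeCell t) : toCube t s ∈ closedBall 0 1 := by
  rw [mem_closedBall_zero_iff, pi_norm_le_iff_of_nonneg zero_le_one]
  intro i
  have h₁ : (⌊t i⌋ : ℝ) ≤ s i := hs.1 i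
  have h₂ : s i ≤ ⌈t i⌉ := hs.2 i
  rw [ceil_eq_floor_add_one_of_mem_freeCoords i.2] at h₂
  push_cast at h₂
  rw [Real.norm_eq_abs, abs_le, toCube]
  constructor <;> linarith

theorem ofCube_mem_latticeSkeleton (hy : y ∈ sphere 0 1) :
    ofCube t y ∈ latticeSkeleton ι (freeCoords t).ncard := by
  rw [mem_sphere_zero_iff_norm] at hy
  obtain h | h := isEmpty_or_nonempty (freeCoords t)
  · simp [Subsingleton.elim y 0] at hy
  obtain ⟨i, hi⟩ := (IsGreatest.pi_norm y).1
  have ofCube_apply : ofCube t y i = ⌊t i⌋ + 1 / 2 + y i / 2 := by simp [ofCube]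
  have hi_integer : ofCube t y i ∈ range ((↑) : ℤ → ℝ) := by
    rcases eq_or_eq_neg_of_abs_eq (hi.trans hy) with h | h
    · exact ⟨⌊t i⌋ + 1, by rw [ofCube_apply, h]; push_cast; ring⟩
    · exact ⟨⌊t i⌋, by rw [ofCube_apply, h]; ring⟩
  exact ncard_lt_ncard (ssubset_of_subset_of_ne
    (freeCoords_subset_of_mem_latticeCell (ofCube_mem_latticeCell
      (mem_closedBall_zero_iff.2 hy.le))) fun h => h.ge i.2 hi_integer) (toFinite _)

theorem toCube_mem_sphere (hs : s ∈ latticeCell t)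
    (hst : s ∈ latticeSkeleton ι (freeCoords t).ncard) : toCube t s ∈ sphere 0 1 := by
  obtain ⟨i, hit, his⟩ := exists_mem_notMem_of_ncard_lt_ncard hst
    ((toFinite _).subset (freeCoords_subset_of_mem_latticeCell hs))
  obtain ⟨n, hn⟩ := not_not.1 his
  have h₁ : ⌊t i⌋ ≤ n := Int.cast_le (R := ℝ).1 ((hs.1 i).trans_eq hn.symm)
  have h₂ : n ≤ ⌈t i⌉ := Int.cast_le (R := ℝ).1 (hn.trans_le (hs.2 i))
  rw [ceil_eq_floor_add_one_of_mem_freeCoords hit] at h₂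
  have toCube_eq : toCube t s ⟨i, hit⟩ = 1 ∨ toCube t s ⟨i, hit⟩ = -1 := by
    obtain rfl | rfl : n = ⌊t i⌋ + 1 ∨ n = ⌊t i⌋ := by lia
    · left; rw [toCube, ← hn]; push_cast; ring
    · right; rw [toCube, ← hn]; ring
  refine mem_sphere_zero_iff_norm.2
    (le_antisymm (mem_closedBall_zero_iff.1 (toCube_mem_closedBall hs)) ?_)
  calc (1 : ℝ) = ‖toCube t s ⟨i, hit⟩‖ := by rcases toCube_eq with h | h <;> simp [h]
    _ ≤ ‖toCube t s‖ := norm_le_pi_norm _ _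

end Chart

section CellExtension

variable {ι Y : Type*} [TopologicalSpace Y] {m : ℕ} {A B : Set Y}

/-- The cubical form of the relation `A ↪ B`: maps from the boundary of an `m`-dimensional lattice
cell into `A` extend over the cell with values in `B`. For `m = 0` the boundary is empty. -/
def CellExtension (ι : Type*) (m : ℕ) (A B : Set Y) : Prop :=
  ∀ t : ι → ℝ, (freeCoords t).ncard = m → ∀ u : (ι → ℝ) → Y,
    ContinuousOn u (latticeCell t ∩ latticeSkeleton ι m) →
    MapsTo u (latticeCell t ∩ latticeSkeleton ι m) A →
    ∃ φ : (ι → ℝ) → Y, ContinuousOn φ (latticeCell t) ∧ MapsTo φ (latticeCell t) B ∧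
      EqOn φ u (latticeCell t ∩ latticeSkeleton ι m)

theorem cellExtension_zero (hB : B.Nonempty) : CellExtension ι 0 A B := fun _ _ _ _ _ =>
  ⟨fun _ => hB.some, continuousOn_const, fun _ _ => hB.some_mem, fun _ hs =>
    absurd hs.2 (Nat.not_lt_zero _)⟩

theorem EmbedK.cellExtension [Finite ι] (hAB : EmbedK m A B) : CellExtension ι (m + 1) A B := by
  intro t ht u u_cont u_mem
  have : Fintype (freeCoords t) := Fintype.ofFinite _
  have boundary : MapsTo (ofCube t) (sphere 0 1) (latticeCell t ∩ latticeSkeleton ι (m + 1)) :=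
    fun y hy => ⟨ofCube_mem_latticeCell (sphere_subset_closedBall hy),
      ht ▸ ofCube_mem_latticeSkeleton hy⟩
  obtain ⟨h, h_cont, h_mem, h_eq⟩ := (embedK_iff_sphereFilling
    (W := freeCoords t → ℝ) (by simp [← Nat.card_eq_fintype_card, ht])).1 hAB
    (u ∘ ofCube t) (u_cont.comp (continuous_ofCube t).continuousOn boundary) (u_mem.comp boundary)
  refine ⟨h ∘ toCube t, h_cont.comp (continuous_toCube t).continuousOn
    fun s hs => toCube_mem_closedBall hs, fun s hs => h_mem (toCube_mem_closedBall hs),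
    fun s hs => ?_⟩
  calc h (toCube t s) = u (ofCube t (toCube t s)) := h_eq (toCube_mem_sphere hs.1 (ht ▸ hs.2))
    _ = u s := by rw [ofCube_toCube hs.1]

end CellExtension

section Collapse

variable {ι : Type*} {N M m : ℕ} {t : ι → ℝ}

/-- The map from the lattice subdivided `N` times to the original lattice that stretches the first
of every `N` subintervals over the whole unit interval and collapses the others to endpoints. -/
noncomputable def latticeCollapse (N : ℕ) (t : ι → ℝ) (i : ι) : ℝ :=
  ⌊(N : ℝ)⁻¹ * t i⌋ + min 1 (N * Int.fract ((N : ℝ)⁻¹ * t i))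

theorem continuous_latticeCollapse (hN : 0 < N) :
    Continuous (latticeCollapse N : (ι → ℝ) → ι → ℝ) := by
  have hN' : (1 : ℝ) ≤ N := by exact_mod_cast hN
  have offset_cont : Continuous ((fun x : ℝ => min 1 (N * x) - x) ∘ Int.fract) :=
    ContinuousOn.comp_fract'' (by fun_prop) (by simp [hN'])
  have collapse_eq (t : ι → ℝ) (i : ι) : latticeCollapse N t i =
      (N : ℝ)⁻¹ * t i + ((fun x : ℝ => min 1 (N * x) - x) ∘ Int.fract) ((N : ℝ)⁻¹ * t i) := by
    simp only [latticeCollapse, Function.comp_apply, Int.fract]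
    ring
  refine continuous_pi fun i => ?_
  simp only [collapse_eq]
  have scaled_cont : Continuous fun t : ι → ℝ => (N : ℝ)⁻¹ * t i := by fun_prop
  exact scaled_cont.add (offset_cont.comp scaled_cont)

theorem latticeCollapse_mem_latticeCell (N : ℕ) (t : ι → ℝ) :
    latticeCollapse N t ∈ latticeCell ((N : ℝ)⁻¹ • t) := by
  refine forall_and.1 fun i => ?_
  simp only [latticeCollapse, Pi.smul_apply, smul_eq_mul]
  set x := (N : ℝ)⁻¹ * t i
  refine ⟨le_add_of_nonneg_right (by positivity), ?_⟩
  by_cases hx : x ∈ range ((↑) : ℤ → ℝ)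
  · obtain ⟨n, hn⟩ := hx
    simp [← hn]
  · rw [(Int.ceil_eq_floor_add_one_iff_notMem x).2 hx]
    push_cast
    gcongr
    exact min_le_left _ _

theorem freeCoords_latticeCollapse_subset (hN : 0 < N) (t : ι → ℝ) :
    freeCoords (latticeCollapse N t) ⊆ freeCoords t := by
  rintro i hi ⟨n, hn⟩
  refine hi ⟨⌊(N : ℝ)⁻¹ * t i⌋ + min 1 (n - N * ⌊(N : ℝ)⁻¹ * t i⌋), ?_⟩
  have scaled_fract : N * Int.fract ((N : ℝ)⁻¹ * t i) = t i - N * ⌊(N : ℝ)⁻¹ * t i⌋ := by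
    rw [Int.fract, mul_sub, mul_inv_cancel_left₀ (by positivity)]
  rw [latticeCollapse, scaled_fract, ← hn]
  push_cast
  rfl

theorem latticeCollapse_mem_latticeSkeleton [Finite ι] (hN : 0 < N)
    (ht : t ∈ latticeSkeleton ι m) : latticeCollapse N t ∈ latticeSkeleton ι m :=
  (ncard_le_ncard (freeCoords_latticeCollapse_subset hN t) (toFinite _)).trans_lt ht

theorem inv_smul_mem_sphere [Fintype ι] (hN : 0 < N)
    (ht : t ∈ sphere (0 : ι → ℝ) (M * N : ℕ)) : (N : ℝ)⁻¹ • t ∈ sphere (0 : ι → ℝ) M := by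
  rw [mem_sphere_zero_iff_norm] at ht ⊢
  rw [norm_smul, ht, norm_inv, Real.norm_natCast, Nat.cast_mul]
  field_simp

theorem latticeCollapse_mem_sphere [Fintype ι] [Nonempty ι] (hN : 0 < N)
    (ht : t ∈ sphere (0 : ι → ℝ) (M * N : ℕ)) : latticeCollapse N t ∈ sphere (0 : ι → ℝ) M :=
  latticeCell_subset_sphere (inv_smul_mem_sphere hN ht) (latticeCollapse_mem_latticeCell N t)

end Collapse

section Glue

theorem exists_continuousOn_union_iUnion {X Y κ : Type*} [TopologicalSpace X] [TopologicalSpace Y]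
    [Finite κ] {A : Set X} (hA : IsClosed A) {e : κ → Set X} (he : ∀ k, IsClosed (e k))
    (he_inter : ∀ k l, k ≠ l → e k ∩ e l ⊆ A) {f : X → Y} (hf : ContinuousOn f A)
    {φ : κ → X → Y} (hφ : ∀ k, ContinuousOn (φ k) (e k)) (hφf : ∀ k, EqOn (φ k) f (e k ∩ A)) :
    ∃ F : X → Y, ContinuousOn F (A ∪ ⋃ k, e k) ∧ EqOn F f A ∧ ∀ k, EqOn F (φ k) (e k) := by
  classical
  let F (x : X) : Y := if hx : x ∉ A ∧ ∃ k, x ∈ e k then φ hx.2.choose x else f x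
  have F_eq_f : EqOn F f A := fun x hx => dif_neg fun h => h.1 hx
  have F_eq_φ (k : κ) : EqOn F (φ k) (e k) := fun x hx => by
    by_cases hxA : x ∈ A
    · rw [F_eq_f hxA, hφf k ⟨hx, hxA⟩]
    · have h : x ∉ A ∧ ∃ k, x ∈ e k := ⟨hxA, k, hx⟩
      have choose_eq : h.2.choose = k := by
        by_contra hne
        exact hxA (he_inter _ _ hne ⟨h.2.choose_spec, hx⟩)
      simp only [F, dif_pos h, choose_eq]
  refine ⟨F, ?_, F_eq_f, F_eq_φ⟩
  refine ContinuousOn.union_of_isClosed (hf.congr F_eq_f) ?_ hA (isClosed_iUnion_of_finite he)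
  exact (locallyFinite_of_finite e).continuousOn_iUnion he fun k => (hφ k).congr (F_eq_φ k)

variable {ι Y : Type*} [Fintype ι] [Nonempty ι] [TopologicalSpace Y] {M m : ℕ}

theorem exists_continuousOn_of_forall_latticeCell {P : Set (ι → ℝ)} (hPM : P ⊆ sphere 0 M)
    (hPm : ∀ t ∈ P, (freeCoords t).ncard = m) {f : (ι → ℝ) → Y}
    (hf : ContinuousOn f (sphere 0 M ∩ latticeSkeleton ι m)) {Ψ : (ι → ℝ) → Set Y}
    (hP : ∀ t ∈ P, ∃ φ : (ι → ℝ) → Y, ContinuousOn φ (latticeCell t) ∧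
      (∀ s ∈ latticeCell t, φ s ∈ Ψ s) ∧ EqOn φ f (latticeCell t ∩ latticeSkeleton ι m)) :
    ∃ F : (ι → ℝ) → Y,
      ContinuousOn F (sphere 0 M ∩ latticeSkeleton ι m ∪ ⋃ t ∈ P, latticeCell t) ∧
      (∀ t ∈ P, F t ∈ Ψ t) ∧ EqOn F f (sphere 0 M ∩ latticeSkeleton ι m) := by
  have hcell : ∀ c : latticeCell '' P, ∃ φ : (ι → ℝ) → Y, ContinuousOn φ c ∧
      (∀ s ∈ (c : Set (ι → ℝ)), φ s ∈ Ψ s) ∧ EqOn φ f (c ∩ latticeSkeleton ι m) := by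
    rintro ⟨_, t, ht, rfl⟩
    exact hP t ht
  choose φ φ_cont φ_mem φ_eq using hcell
  have : Finite (latticeCell '' P) := (finite_latticeCell_image_closedBall M).subset
    (image_mono (hPM.trans sphere_subset_closedBall))
  have inter_subset (c d : latticeCell '' P) (hcd : c ≠ d) :
      (c ∩ d : Set (ι → ℝ)) ⊆ sphere 0 M ∩ latticeSkeleton ι m := by
    obtain ⟨_, s, hs, rfl⟩ := c
    obtain ⟨_, t, ht, rfl⟩ := d
    rintro x ⟨hxs, hxt⟩
    refine ⟨latticeCell_subset_sphere (hPM hs) hxs, ?_⟩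
    by_contra hx
    have cell_eq {r : ι → ℝ} (hr : r ∈ P) (hxr : x ∈ latticeCell r) :
        latticeCell x = latticeCell r :=
      (mem_latticeSkeleton_or_latticeCell_eq hxr (Nat.lt_succ_of_le (hPm r hr).le)).resolve_left hx
    exact hcd (Subtype.ext ((cell_eq hs hxs).symm.trans (cell_eq ht hxt)))
  obtain ⟨F, F_cont, F_eq_f, F_eq_φ⟩ := exists_continuousOn_union_iUnion
    (isClosed_sphere.inter (isClosed_latticeSkeleton m))
    (fun c : latticeCell '' P => by
      obtain ⟨_, t, -, rfl⟩ := c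
      exact isClosed_latticeCell t) inter_subset hf φ_cont
    fun c x hx => φ_eq c ⟨hx.1, hx.2.2⟩
  refine ⟨F, ?_, fun t ht => ?_, F_eq_f⟩
  · simpa [iUnion_subtype] using F_cont
  · rw [F_eq_φ ⟨_, t, ht, rfl⟩ (mem_latticeCell_self t)]
    exact φ_mem _ t (mem_latticeCell_self t)

end Glue

theorem exists_natCast_smul_eq_of_mem_sphere {V : Type*} [NormedAddCommGroup V] [NormedSpace ℝ V]
    {M : ℕ} (hM : 0 < M) {s : V} (hs : s ∈ sphere (0 : V) M) :
    ∃ x : sphere (0 : V) 1, (M : ℝ) • (x : V) = s := by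
  have M_ne : (M : ℝ) ≠ 0 := by positivity
  refine ⟨⟨(M : ℝ)⁻¹ • s, ?_⟩, smul_inv_smul₀ M_ne s⟩
  rw [mem_sphere_zero_iff_norm] at hs ⊢
  rw [norm_smul, hs, norm_inv, Real.norm_natCast, inv_mul_cancel₀ M_ne]

theorem exists_nat_lebesgue_number {X : Type*} [PseudoMetricSpace X] [CompactSpace X]
    {U : X → Set X} (hU : ∀ x, IsOpen (U x)) (hxU : ∀ x, x ∈ U x) (R : ℝ) :
    ∃ N : ℕ, 0 < N ∧ ∀ x, ∃ y, ∀ x', N * dist x x' ≤ R → x' ∈ U y := by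
  obtain ⟨ρ, ρ_pos, hρ⟩ := lebesgue_number_lemma_of_metric isCompact_univ hU
    fun x _ => mem_iUnion_of_mem x (hxU x)
  obtain ⟨N, hN⟩ := exists_nat_gt (max 0 (R / ρ))
  have N_pos : (0 : ℝ) < N := (le_max_left _ _).trans_lt hN
  refine ⟨N, Nat.cast_pos.1 N_pos, fun x => ?_⟩
  obtain ⟨y, hy⟩ := hρ x (mem_univ x)
  refine ⟨y, fun x' hx' => hy (mem_ball'.2 (lt_of_mul_lt_mul_left ?_ N_pos.le))⟩
  exact hx'.trans_lt ((div_lt_iff₀ ρ_pos).1 ((le_max_right _ _).trans_lt hN))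

section Selection

variable {ι Y : Type*} [Fintype ι] [TopologicalSpace Y] {M m : ℕ}
  {Φ Φ' : sphere (0 : ι → ℝ) 1 → Set Y} {f : (ι → ℝ) → Y}

/-- The values allowed at the point `t` of the cube surface of radius `M` when approximating a
selection of `Φ`: a point `M • x` of this surface represents `x`, and the value at `t` has to lie in
`Φ x` for every `x` represented within `4` lattice cells of `t`. The number `4` leaves room for the
cells met in `IsCoarseSelection.exists_local_extension`. -/
def coarseValues (M : ℕ) (Φ : sphere (0 : ι → ℝ) 1 → Set Y) (t : ι → ℝ) : Set Y :=
  {v | ∀ x : sphere (0 : ι → ℝ) 1, dist t ((M : ℝ) • x) ≤ 4 → v ∈ Φ x}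

/-- An approximate selection of `Φ` over the part of `latticeSkeleton ι m` on the cube surface of
radius `M`. -/
def IsCoarseSelection (M m : ℕ) (Φ : sphere (0 : ι → ℝ) 1 → Set Y) (f : (ι → ℝ) → Y) : Prop :=
  ContinuousOn f (sphere 0 M ∩ latticeSkeleton ι m) ∧
    ∀ t ∈ sphere 0 (M : ℝ) ∩ latticeSkeleton ι m, f t ∈ coarseValues M Φ t

/-- The part of `latticeSkeleton ι m` on the cube surface of radius `M` that lies near the point
representing `x`. -/
def skeletonNear (M m : ℕ) (x : sphere (0 : ι → ℝ) 1) : Set (ι → ℝ) :=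
  sphere 0 M ∩ latticeSkeleton ι m ∩ closedBall ((M : ℝ) • x) 3

theorem isCompact_skeletonNear (M m : ℕ) (x : sphere (0 : ι → ℝ) 1) :
    IsCompact (skeletonNear M m x) :=
  ((isCompact_sphere _ _).inter_right (isClosed_latticeSkeleton _)).inter_right isClosed_closedBall

theorem IsCoarseSelection.exists_local_extension [Nonempty ι] (hf : IsCoarseSelection M m Φ f)
    (x : sphere (0 : ι → ℝ) 1) (hΦ : Φ x ⊆ Φ' x) (hcell : CellExtension ι m (Φ x) (Φ' x)) :
    ∃ F : (ι → ℝ) → Y, EqOn F f (sphere 0 M ∩ latticeSkeleton ι m) ∧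
      ContinuousOn F (skeletonNear M (m + 1) x) ∧
      MapsTo F (skeletonNear M (m + 1) x) (Φ' x) := by
  let P : Set (ι → ℝ) :=
    {t | t ∈ sphere 0 (M : ℝ) ∧ (freeCoords t).ncard = m ∧ dist t ((M : ℝ) • x) ≤ 3}
  have hP : ∀ t ∈ P, ∃ φ : (ι → ℝ) → Y, ContinuousOn φ (latticeCell t) ∧
      (∀ s ∈ latticeCell t, φ s ∈ Φ' x) ∧ EqOn φ f (latticeCell t ∩ latticeSkeleton ι m) := by
    rintro t ⟨htM, htm, htx⟩
    have boundary_subset : latticeCell t ∩ latticeSkeleton ι m ⊆ sphere 0 M ∩ latticeSkeleton ι m :=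
      inter_subset_inter_left _ (latticeCell_subset_sphere htM)
    refine hcell t htm f (hf.1.mono boundary_subset) fun s hs =>
      hf.2 s (boundary_subset hs) x ?_
    linarith [dist_triangle s t ((M : ℝ) • x), dist_le_one_of_mem_latticeCell hs.1]
  obtain ⟨F, F_cont, F_mem, F_eq⟩ := exists_continuousOn_of_forall_latticeCell
    (Ψ := fun _ => Φ' x) (fun t ht => ht.1) (fun t ht => ht.2.1) hf.1 hP
  have mem_or_mem : ∀ t ∈ skeletonNear M (m + 1) x,
      t ∈ sphere 0 M ∩ latticeSkeleton ι m ∨ t ∈ P := fun t ⟨⟨htM, htm⟩, htx⟩ =>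
    (Nat.lt_succ_iff_lt_or_eq.1 htm).imp (⟨htM, ·⟩) (⟨htM, ·, htx⟩)
  refine ⟨F, F_eq, F_cont.mono fun t ht => (mem_or_mem t ht).imp_right fun htP =>
    mem_biUnion htP (mem_latticeCell_self t), fun t ht => ?_⟩
  obtain htm | htP := mem_or_mem t ht
  · rw [F_eq htm]
    exact hΦ (hf.2 t htm x (ht.2.trans (by norm_num)))
  · exact F_mem t htP

theorem dist_latticeCollapse_le {N : ℕ} {s t z : ι → ℝ} (hts : t ∈ latticeCell s)
    (hsz : dist ((N : ℝ)⁻¹ • s) z ≤ 1) : dist (latticeCollapse N t) z ≤ 3 := by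
  have h₁ : dist (latticeCollapse N t) ((N : ℝ)⁻¹ • t) ≤ 1 :=
    dist_le_one_of_mem_latticeCell (latticeCollapse_mem_latticeCell N t)
  have h₂ : dist ((N : ℝ)⁻¹ • t) ((N : ℝ)⁻¹ • s) ≤ 1 := by
    rw [dist_smul₀, norm_inv, Real.norm_natCast]
    exact mul_le_one₀ (Nat.cast_inv_le_one N) dist_nonneg (dist_le_one_of_mem_latticeCell hts)
  linarith [dist_triangle4 (latticeCollapse N t) ((N : ℝ)⁻¹ • t) ((N : ℝ)⁻¹ • s) z]

theorem exists_subdivision [Nonempty ι] (hM : 0 < M) (m : ℕ)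
    {U : sphere (0 : ι → ℝ) 1 → Set (sphere (0 : ι → ℝ) 1)} (hU : ∀ x, IsOpen (U x))
    (hxU : ∀ x, x ∈ U x) :
    ∃ N : ℕ, 0 < N ∧ ∀ s ∈ sphere (0 : ι → ℝ) (M * N : ℕ) ∩ latticeSkeleton ι m, ∃ y,
      MapsTo (latticeCollapse N) (latticeCell s) (skeletonNear M m y) ∧
      ∀ t ∈ latticeCell s, ∀ x : sphere (0 : ι → ℝ) 1,
        dist t (((M * N : ℕ) : ℝ) • (x : ι → ℝ)) ≤ 4 → x ∈ U y := by
  have near_open (x : sphere (0 : ι → ℝ) 1) :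
      IsOpen {x' : sphere (0 : ι → ℝ) 1 | dist ((M : ℝ) • (x' : ι → ℝ)) ((M : ℝ) • x) < 1} :=
    isOpen_lt (by fun_prop) continuous_const
  obtain ⟨N, N_pos, hN⟩ := exists_nat_lebesgue_number
    (fun x => (hU x).inter (near_open x)) (fun x => ⟨hxU x, by simp⟩) 5
  refine ⟨N, N_pos, fun s ⟨hsM, hsm⟩ => ?_⟩
  obtain ⟨p, rfl⟩ := exists_natCast_smul_eq_of_mem_sphere (Nat.mul_pos hM N_pos) hsM
  obtain ⟨y, hy⟩ := hN p
  refine ⟨y, fun t ht => ⟨⟨?_, ?_⟩, ?_⟩, fun t ht x htx => (hy x ?_).1⟩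
  · exact latticeCollapse_mem_sphere N_pos (latticeCell_subset_sphere hsM ht)
  · exact latticeCollapse_mem_latticeSkeleton N_pos (latticeCell_subset_latticeSkeleton hsm ht)
  · have coarse_eq : (N : ℝ)⁻¹ • ((M * N : ℕ) : ℝ) • (p : ι → ℝ) = (M : ℝ) • (p : ι → ℝ) := by
      rw [smul_smul]
      push_cast
      field_simp
    exact dist_latticeCollapse_le ht (coarse_eq ▸ (hy p (by simp)).2.le)
  · have N_le : (N : ℝ) ≤ (M * N : ℕ) := by exact_mod_cast Nat.le_mul_of_pos_left N hM
    calc N * dist p x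
        ≤ (M * N : ℕ) * dist p x := by gcongr
      _ = dist (((M * N : ℕ) : ℝ) • (p : ι → ℝ)) (((M * N : ℕ) : ℝ) • (x : ι → ℝ)) := by
        rw [dist_smul₀, Real.norm_natCast, Subtype.dist_eq]
      _ ≤ 5 := by
        linarith [dist_triangle_left (((M * N : ℕ) : ℝ) • (p : ι → ℝ))
          (((M * N : ℕ) : ℝ) • (x : ι → ℝ)) t, dist_le_one_of_mem_latticeCell ht]

theorem IsCoarseSelection.exists_succ [Nonempty ι] (hM : 0 < M) (hf : IsCoarseSelection M m Φ f)
    (hΦ : ∀ x, Φ x ⊆ Φ' x) (hcell : ∀ x, CellExtension ι m (Φ x) (Φ' x))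
    (hΦ' : LowerLocallyConstant Φ') :
    ∃ M' > 0, ∃ f', IsCoarseSelection M' (m + 1) Φ' f' := by
  choose F F_eq F_cont F_mem using fun x => hf.exists_local_extension x (hΦ x) (hcell x)
  have image_compact (x) : IsCompact (F x '' skeletonNear M (m + 1) x) :=
    (isCompact_skeletonNear M (m + 1) x).image_of_continuousOn (F_cont x)
  obtain ⟨N, N_pos, hN⟩ := exists_subdivision hM (m + 1) (fun x => hΦ' _ (image_compact x))
    fun x => (F_mem x).image_subset
  have collapse_mem : MapsTo (latticeCollapse N) (sphere 0 (M * N : ℕ) ∩ latticeSkeleton ι m)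
      (sphere 0 (M : ℝ) ∩ latticeSkeleton ι m) := fun t ht =>
    ⟨latticeCollapse_mem_sphere N_pos ht.1, latticeCollapse_mem_latticeSkeleton N_pos ht.2⟩
  let P : Set (ι → ℝ) := {t | t ∈ sphere 0 ((M * N : ℕ) : ℝ) ∧ (freeCoords t).ncard = m}
  have hP : ∀ t ∈ P, ∃ φ : (ι → ℝ) → Y, ContinuousOn φ (latticeCell t) ∧
      (∀ s ∈ latticeCell t, φ s ∈ coarseValues (M * N) Φ' s) ∧
      EqOn φ (f ∘ latticeCollapse N) (latticeCell t ∩ latticeSkeleton ι m) := by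
    rintro t ⟨htM, htm⟩
    obtain ⟨y, hyZ, hyU⟩ := hN t ⟨htM, Nat.lt_succ_of_le htm.le⟩
    refine ⟨F y ∘ latticeCollapse N, (F_cont y).comp
      (continuous_latticeCollapse N_pos).continuousOn hyZ, fun s hs x hsx =>
      hyU s hs x hsx (mem_image_of_mem _ (hyZ hs)), fun s hs => F_eq y (collapse_mem ?_)⟩
    exact ⟨latticeCell_subset_sphere htM hs.1, hs.2⟩
  obtain ⟨f', f'_cont, f'_mem, f'_eq⟩ := exists_continuousOn_of_forall_latticeCell
    (Ψ := coarseValues (M * N) Φ') (fun t ht => ht.1) (fun t ht => ht.2)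
    (hf.1.comp (continuous_latticeCollapse N_pos).continuousOn collapse_mem) hP
  refine ⟨M * N, Nat.mul_pos hM N_pos, f', f'_cont.mono fun t ht => ?_, fun t ht => ?_⟩
  · exact (Nat.lt_succ_iff_lt_or_eq.1 ht.2).imp (⟨ht.1, ·⟩)
      fun htm => mem_biUnion (show t ∈ P from ⟨ht.1, htm⟩) (mem_latticeCell_self t)
  · obtain htm | htm := Nat.lt_succ_iff_lt_or_eq.1 ht.2
    · intro x htx
      obtain ⟨y, hyZ, hyU⟩ := hN t ht
      rw [f'_eq ⟨ht.1, htm⟩, Function.comp_apply, ← F_eq y (collapse_mem ⟨ht.1, htm⟩)]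
      exact hyU t (mem_latticeCell_self t) x htx
        (mem_image_of_mem _ (hyZ (mem_latticeCell_self t)))
    · exact f'_mem t ⟨ht.1, htm⟩

end Selection

theorem exists_selection_of_sphere {ι Y : Type*} [Fintype ι] [TopologicalSpace Y] {k : ℕ}
    (hk : Fintype.card ι = k + 1) {Φ : ℕ → sphere (0 : ι → ℝ) 1 → Set Y}
    (hne : ∀ x, (Φ 0 x).Nonempty) (hΦ : ∀ i ≤ k, LowerLocallyConstant (Φ i))
    (hembed : ∀ i < k, ∀ x, EmbedK i (Φ i x) (Φ (i + 1) x)) :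
    ∃ f : (ι → ℝ) → Y, ContinuousOn f (sphere 0 1) ∧ ∀ x : sphere (0 : ι → ℝ) 1, f x ∈ Φ k x := by
  have : Nonempty ι := Fintype.card_pos_iff.1 (hk ▸ k.succ_pos)
  obtain ⟨p, hp⟩ := NormedSpace.sphere_nonempty (E := ι → ℝ) (x := 0).2 zero_le_one
  have coarse : ∀ i ≤ k, ∃ M > 0, ∃ f, IsCoarseSelection M (i + 1) (Φ i) f := by
    intro i hi
    induction i with
    | zero =>
      have empty_skeleton : sphere (0 : ι → ℝ) (1 : ℕ) ∩ latticeSkeleton ι 0 = ∅ :=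
        eq_empty_of_forall_notMem fun t ht => Nat.not_lt_zero _ ht.2
      have coarse_empty : IsCoarseSelection 1 0 (fun _ : sphere (0 : ι → ℝ) 1 => (∅ : Set Y))
          fun _ => (hne ⟨p, hp⟩).some := by
        rw [IsCoarseSelection, empty_skeleton]
        exact ⟨continuousOn_empty _, fun _ => False.elim⟩
      exact coarse_empty.exists_succ one_pos (fun x => empty_subset _)
        (fun x => cellExtension_zero (hne x)) (hΦ 0 hi)
    | succ i ih =>
      obtain ⟨M, M_pos, f, hf⟩ := ih (Nat.le_of_succ_le hi)
      exact hf.exists_succ M_pos (fun x => (hembed i hi x).subset)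
        (fun x => (hembed i hi x).cellExtension) (hΦ (i + 1) hi)
  obtain ⟨M, -, f, f_cont, f_mem⟩ := coarse k le_rfl
  have smul_mem : MapsTo (fun x : ι → ℝ => (M : ℝ) • x) (sphere 0 1)
      (sphere 0 M ∩ latticeSkeleton ι (k + 1)) := fun x hx => by
    have hMx : (M : ℝ) • x ∈ sphere (0 : ι → ℝ) M := by
      rw [mem_sphere_zero_iff_norm] at hx ⊢
      rw [norm_smul, hx, Real.norm_natCast, mul_one]
    exact ⟨hMx, hk ▸ sphere_subset_latticeSkeleton M hMx⟩
  exact ⟨fun x => f ((M : ℝ) • x), f_cont.comp (by fun_prop) smul_mem, fun x =>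
    f_mem _ (smul_mem x.2) x (by simp)⟩

theorem lowerLocallyConstant_ball_inter {X Y : Type*} [TopologicalSpace X] [PseudoMetricSpace Y]
    {g : X → Y} (hg : Continuous g) (r : ℝ) (S : Set Y) :
    LowerLocallyConstant fun x => ball (g x) r ∩ S := by
  intro K hK
  by_cases hKS : K ⊆ S
  · refine isOpen_iff_eventually.2 fun x hx => ?_
    have near : ∀ᶠ x' in nhds x, ∀ y ∈ K, (y, x') ∈ {p : Y × X | dist p.1 (g p.2) < r} :=
      hK.eventually_forall_of_forall_eventually fun y hy =>
        (isOpen_lt (by fun_prop) (by fun_prop)).eventually_mem (hx hy).1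
    exact near.mono fun x' hx' y hy => ⟨hx' y hy, hKS hy⟩
  · convert isOpen_empty
    exact eq_empty_of_forall_notMem fun x hx => hKS (hx.trans inter_subset_right)

section Collar

variable {V E : Type*} [NormedAddCommGroup V] [NormedSpace ℝ V] [NormedAddCommGroup E]
  [NormedSpace ℝ E] {B : Set E} {h g : V → E}

theorem exists_continuousOn_collar_of_segment_subset (hh : ContinuousOn h (sphere 0 1))
    (hg : ContinuousOn g (sphere 0 1)) (hseg : ∀ p ∈ sphere 0 1, segment ℝ (h p) (g p) ⊆ B) :
    ∃ b : V → E, ContinuousOn b (closedBall 0 1 \ ball 0 (1 / 2)) ∧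
      MapsTo b (closedBall 0 1 \ ball 0 (1 / 2)) B ∧
      EqOn b (fun x => h ((2 : ℝ) • x)) (sphere 0 (1 / 2)) ∧ EqOn b g (sphere 0 1) := by
  let direction (x : V) : V := ‖x‖⁻¹ • x
  have norm_bounds {x : V} (hx : x ∈ closedBall 0 1 \ ball 0 (1 / 2)) : 1 / 2 ≤ ‖x‖ ∧ ‖x‖ ≤ 1 :=
    ⟨not_lt.1 fun hlt => hx.2 (mem_ball_zero_iff.2 hlt), mem_closedBall_zero_iff.1 hx.1⟩
  have norm_ne {x : V} (hx : x ∈ closedBall 0 1 \ ball 0 (1 / 2)) : ‖x‖ ≠ 0 :=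
    (one_half_pos.trans_le (norm_bounds hx).1).ne'
  have direction_mem : MapsTo direction (closedBall 0 1 \ ball 0 (1 / 2)) (sphere 0 1) :=
    fun x hx => by
      rw [mem_sphere_zero_iff_norm, norm_smul, norm_inv, norm_norm, inv_mul_cancel₀ (norm_ne hx)]
  have direction_cont : ContinuousOn direction (closedBall 0 1 \ ball 0 (1 / 2)) :=
    (continuousOn_id.norm.inv₀ fun x hx => norm_ne hx).smul continuousOn_id
  refine ⟨fun x => AffineMap.lineMap (h (direction x)) (g (direction x)) (2 * ‖x‖ - 1),
    (hh.comp direction_cont direction_mem).lineMap (hg.comp direction_cont direction_mem)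
      (by fun_prop), fun x hx => hseg _ (direction_mem hx) ?_, fun x hx => ?_, fun x hx => ?_⟩
  · rw [segment_eq_image_lineMap]
    refine mem_image_of_mem _ ⟨?_, ?_⟩ <;> linarith [norm_bounds hx]
  · simp [direction, mem_sphere_zero_iff_norm.1 hx]
  · norm_num [direction, mem_sphere_zero_iff_norm.1 hx]

theorem exists_continuousOn_closedBall_of_segment_subset (hh : ContinuousOn h (closedBall 0 1))
    (h_mem : MapsTo h (closedBall 0 1) B) (hg : ContinuousOn g (sphere 0 1))
    (hseg : ∀ p ∈ sphere 0 1, segment ℝ (h p) (g p) ⊆ B) :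
    ∃ h' : V → E, ContinuousOn h' (closedBall 0 1) ∧ MapsTo h' (closedBall 0 1) B ∧
      EqOn h' g (sphere 0 1) := by
  obtain ⟨b, b_cont, b_mem, b_eq_h, b_eq_g⟩ := exists_continuousOn_collar_of_segment_subset
    (hh.mono sphere_subset_closedBall) hg hseg
  have double_mem : MapsTo (fun x : V => (2 : ℝ) • x) (closedBall 0 (1 / 2)) (closedBall 0 1) :=
    fun x hx => by
      rw [mem_closedBall_zero_iff] at hx ⊢
      rw [norm_smul, Real.norm_ofNat]
      linarith
  obtain ⟨F, F_cont, F_eq_h, F_eq_b⟩ := exists_continuousOn_union_iUnion (κ := Unit)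
    isClosed_closedBall (fun _ => isClosed_closedBall.sdiff isOpen_ball)
    (fun _ _ hne => absurd rfl hne) (hh.comp (by fun_prop) double_mem) (fun _ => b_cont)
    fun _ x hx => b_eq_h (closedBall_sdiff_ball.subset ⟨hx.2, hx.1.2⟩)
  have inner_or_collar : ∀ x ∈ closedBall (0 : V) 1,
      x ∈ closedBall 0 (1 / 2) ∨ x ∈ closedBall (0 : V) 1 \ ball 0 (1 / 2) := fun x hx =>
    or_iff_not_imp_left.2 fun hx' => ⟨hx, fun hxb => hx' (ball_subset_closedBall hxb)⟩
  refine ⟨F, F_cont.mono fun x hx => (inner_or_collar x hx).imp_right (mem_iUnion_of_mem ()),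
    fun x hx => ?_, fun x hx => ?_⟩
  · obtain hx | hx := inner_or_collar x hx
    · rw [F_eq_h hx]
      exact h_mem (double_mem hx)
    · rw [F_eq_b () hx]
      exact b_mem hx
  · have hx_collar : x ∈ closedBall (0 : V) 1 \ ball 0 (1 / 2) :=
      ⟨sphere_subset_closedBall hx, fun hxb => by
        linarith [mem_sphere_zero_iff_norm.1 hx, mem_ball_zero_iff.1 hxb]⟩
    rw [F_eq_b () hx_collar, b_eq_g hx]

end Collar

theorem segment_subset_ball_inter_oNbhd {E : Type*} [NormedAddCommGroup E] [NormedSpace ℝ E]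
    {T : Set E} {x y z : E} {ε μ : ℝ} (hx : x ∈ ball y ε ∩ T) (hzy : z ∈ ball y ε)
    (hzx : z ∈ ball x μ) : segment ℝ x z ⊆ ball y ε ∩ ONbhd μ T :=
  subset_inter ((convex_ball y ε).segment_subset hx.1 hzy)
    (((convex_ball x μ).segment_subset (mem_ball_self (pos_of_mem_ball hzx)) hzx).trans
      (subset_biUnion_of_mem (u := fun x => ball x μ) hx.2))

theorem ball_subset_ball_of_inter_subset {E : Type*} [SeminormedAddCommGroup E] {T : Set E}
    (hT : T.Nonempty) {r r' : ℝ} (h : ∀ y, ball y r ∩ T ⊆ ball y r' ∩ T) (y : E) :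
    ball y r ⊆ ball y r' := by
  obtain ⟨t, ht⟩ := hT
  intro x hx
  have := (@h (t + (y - x)) t ⟨by simpa [dist_eq_norm, norm_sub_rev] using hx, ht⟩).1
  simpa [dist_eq_norm, norm_sub_rev] using this

theorem exists_selection_near {ι Y : Type*} [Fintype ι] [PseudoMetricSpace Y] {k : ℕ}
    (hk : Fintype.card ι = k + 1) {δ : ℝ → ℝ} (hδ : ∀ ε > 0, 0 < δ ε) {S : Set Y}
    (hS : ∀ y : Y, ∀ ε > (0 : ℝ), ∀ i < k, EmbedK i (ball y (δ ε) ∩ S) (ball y ε ∩ S))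
    {ν : ℝ} (hν : 0 < ν) {g : (ι → ℝ) → Y} (hg : ContinuousOn g (sphere 0 1))
    (hgS : MapsTo g (sphere 0 1) (ONbhd (δ^[k] ν) S)) :
    ∃ f : (ι → ℝ) → Y, ContinuousOn f (sphere 0 1) ∧ ∀ x ∈ sphere 0 1, f x ∈ ball (g x) ν ∩ S := by
  let Φ (i : ℕ) (x : sphere (0 : ι → ℝ) 1) : Set Y := ball (g x) (δ^[k - i] ν) ∩ S
  have Φ_nonempty (x) : (Φ 0 x).Nonempty := by
    obtain ⟨s, hs, hxs⟩ := mem_iUnion₂.1 (hgS x.2)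
    exact ⟨s, mem_ball_comm.1 hxs, hs⟩
  have Φ_embed : ∀ i < k, ∀ x, EmbedK i (Φ i x) (Φ (i + 1) x) := fun i hi x => by
    have radius_eq : δ^[k - i] ν = δ (δ^[k - (i + 1)] ν) := by
      rw [← Function.iterate_succ_apply' δ, show k - i = (k - (i + 1)).succ by lia]
    simp only [Φ, radius_eq]
    exact hS (g x) _ ((show MapsTo δ (Ioi 0) (Ioi 0) from hδ).iterate _ hν) i hi
  obtain ⟨f, f_cont, f_mem⟩ := exists_selection_of_sphere hk Φ_nonempty
    (fun i _ => lowerLocallyConstant_ball_inter (continuousOn_iff_continuous_domRestrict.1 hg) _ S)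
    Φ_embed
  exact ⟨f, f_cont, fun x hx => by simpa [Φ] using f_mem ⟨x, hx⟩⟩

/-- Corollary 4.5, with η(ε) = δ(ε)/2 and λ(ε,μ) = δ_k(min{η(ε), μ}). -/
theorem embed_of_balls_and_neighbourhoods
    {E : Type*} [NormedAddCommGroup E] [NormedSpace ℝ E]
    (k : ℕ) (δ : ℝ → ℝ) (hδpos : ∀ ε > 0, 0 < δ ε)
    (S T : Set E) (hS : S.Nonempty) (hST : S ⊆ T)
    (hT : ∀ y : E, ∀ ε > (0 : ℝ), EmbedK k (ball y (δ ε) ∩ T) (ball y ε ∩ T))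
    (hLC : ∀ y : E, ∀ ε > (0 : ℝ), ∀ i < k, EmbedK i (ball y (δ ε) ∩ S) (ball y ε ∩ S)) :
    ∀ y : E, ∀ ε > (0 : ℝ), ∀ μ > (0 : ℝ),
      EmbedK k (ball y (δ ε / 2) ∩ ONbhd (δ^[k] (min (δ ε / 2) μ)) S)
        (ball y ε ∩ ONbhd μ T) := by
  intro y ε hε μ hμ
  rw [embedK_iff_sphereFilling (W := Fin (k + 1) → ℝ) (by simp)]
  intro g g_cont g_mem
  obtain ⟨f, f_cont, f_mem⟩ := exists_selection_near (by simp) hδpos hLC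
    (lt_min (half_pos (hδpos ε hε)) hμ) g_cont fun x hx => (g_mem hx).2
  have f_near {x} (hx : x ∈ sphere 0 1) : g x ∈ ball (f x) (δ ε / 2) ∧ g x ∈ ball (f x) μ :=
    lt_min_iff.1 (mem_ball'.1 (f_mem x hx).1)
  have f_mem_ball : MapsTo f (sphere 0 1) (ball y (δ ε) ∩ T) := fun x hx => by
    refine ⟨mem_ball.2 ?_, hST (f_mem x hx).2⟩
    calc dist (f x) y ≤ dist (g x) (f x) + dist (g x) y := dist_triangle_left _ _ _
      _ < δ ε / 2 + δ ε / 2 := add_lt_add (f_near hx).1 (g_mem hx).1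
      _ = δ ε := add_halves _
  obtain ⟨h, h_cont, h_mem, h_eq⟩ :=
    (embedK_iff_sphereFilling (by simp)).1 (hT y ε hε) f f_cont f_mem_ball
  have half_ball_subset : ball y (δ ε / 2) ⊆ ball y ε :=
    (ball_subset_ball (half_le_self (hδpos ε hε).le)).trans
      (ball_subset_ball_of_inter_subset (hS.mono hST) (fun z => (hT z ε hε).subset) y)
  refine exists_continuousOn_closedBall_of_segment_subset h_cont
    (fun x hx => ⟨(h_mem hx).1, mem_biUnion (h_mem hx).2 (mem_ball_self hμ)⟩) g_cont fun p hp => ?_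
  exact segment_subset_ball_inter_oNbhd (h_mem (sphere_subset_closedBall hp))
    (half_ball_subset (g_mem hp).1) (h_eq hp ▸ (f_near hp).2)
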